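/- (Upper bound of the logarithm law) Let {u_t} be a one-parameter unipotent subgroup of SL(n,ℝ), n ≥ 2. For Haar-almost every Λ ∈ X_n, limsup_{t→∞} log α₁(u_t Λ)/log t ≤ 1/n. -/

import Mathlib

open MeasureTheory Filter Matrix Real ENNReal

noncomputable section

/-- `SL(n, ℝ)`. -/
abbrev SLR (n : ℕ) := Matrix.SpecialLinearGroup (Fin n) ℝ

instance (n : ℕ) : TopologicalSpace (SLR n) :=
  TopologicalSpace.induced (fun g => (g : Matrix (Fin n) (Fin n) ℝ)) inferInstance

/-- The image of `SL(n, ℤ)` in `SL(n, ℝ)`. -/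
def latticeGamma (n : ℕ) : Subgroup (SLR n) :=
  (Matrix.SpecialLinearGroup.map (n := Fin n) (Int.castRingHom ℝ)).range

/-- The space of unimodular lattices `X_n = SL(n,ℝ)/SL(n,ℤ)`. -/
abbrev LatticeSpace (n : ℕ) := SLR n ⧸ latticeGamma n

instance (n : ℕ) : MeasurableSpace (LatticeSpace n) := borel _

/-- The real vector `g · m` of the lattice `g ℤⁿ` coming from the integer vector `m`. -/
def vecOf (n : ℕ) (g : SLR n) (m : Fin n → ℤ) : Fin n → ℝ :=
  (g : Matrix (Fin n) (Fin n) ℝ).mulVec (fun i => (m i : ℝ))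

/-- Euclidean norm on `Fin n → ℝ`. -/
def eNorm {n : ℕ} (v : Fin n → ℝ) : ℝ := ‖(WithLp.equiv 2 (Fin n → ℝ)).symm v‖

/-- The lattice `Λ` contains a nonzero vector lying in `A`. -/
def Intersects (n : ℕ) (Λ : LatticeSpace n) (A : Set (Fin n → ℝ)) : Prop :=
  ∀ g : SLR n, (QuotientGroup.mk g : LatticeSpace n) = Λ →
    ∃ m : Fin n → ℤ, m ≠ 0 ∧ vecOf n g m ∈ A

/-- `α₁(Λ) = sup_{0 ≠ v ∈ Λ} 1/‖v‖` (Euclidean norm). -/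
def alpha1 (n : ℕ) (Λ : LatticeSpace n) : ℝ :=
  sSup {r : ℝ | ∃ g : SLR n, (QuotientGroup.mk g : LatticeSpace n) = Λ ∧
    ∃ m : Fin n → ℤ, m ≠ 0 ∧ r = 1 / eNorm (vecOf n g m)}

/-!
Short vectors of a random lattice are controlled by a finite measure that is invariant under
`SL(n, ℝ)`, without integrating over a fundamental domain.

Projecting a lattice along a shortest vector and inducting on the dimension gives a box of volume
bounded below which, shrunk by a constant, contains no nonzero lattice point, and one side `D p` of
which is the length of a shortest vector, comparable to `x`, say. The shears `v ↦ v + v p • a` with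
integral parameters `a i` of size at most `D i / x` move the set of such lattices around: a packing
argument shows that boundedly many of the images contain a given lattice, so by invariance this set
has measure `O(∏ i, x / D i)`. Since `∏ i, D i` is bounded below, part of the decay in the sides can
be traded for convergence of the sum over dyadic side lengths, and the lattices with a nonzero
vector of norm at most `x` have measure `O(x ^ s)` for every `s < n`.

Hence for `β > 1 / n` the Borel–Cantelli lemma excludes vectors of norm `k ^ (-β)` at all large
integer times `k`, for any sequence of group elements. Between integer times the operator norm of
`u` is bounded by compactness.
-/

section Packing

variable {ι : Type*}

/-- The open box `∏ᵢ (-εᵢ, εᵢ)` contains no nonzero element of `L`. -/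
def AvoidsBox (L : AddSubgroup (ι → ℝ)) (ε : ι → ℝ) : Prop :=
  ∀ v ∈ L, (∀ i, |v i| < ε i) → v = 0

theorem AvoidsBox.mono {L : AddSubgroup (ι → ℝ)} {δ ε : ι → ℝ} (h : AvoidsBox L ε) (hδ : δ ≤ ε) :
    AvoidsBox L δ :=
  fun v hv hvδ => h v hv fun i => (hvδ i).trans_le (hδ i)

theorem AvoidsBox.card_le [Fintype ι] {L : AddSubgroup (ι → ℝ)} {ε : ι → ℝ} (h : AvoidsBox L ε)
    (hε : ∀ i, 0 < ε i) {R : ℝ} {S : Finset (ι → ℝ)} (hSL : ∀ v ∈ S, v ∈ L)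
    (hSR : ∀ v ∈ S, ∀ i, |v i| ≤ R * ε i) :
    S.card ≤ (2 * ⌈R⌉₊ + 1) ^ Fintype.card ι := by
  classical
  let cell : (ι → ℝ) → ι → ℤ := fun v i => ⌊v i / ε i⌋
  let cells : Finset (ι → ℤ) := Fintype.piFinset fun _ => Finset.Icc (-⌈R⌉₊ : ℤ) ⌈R⌉₊
  have cell_mem : ∀ v ∈ S, cell v ∈ cells := by
    intro v hv
    refine Fintype.mem_piFinset.2 fun i => Finset.mem_Icc.2 ?_
    have hle : |v i / ε i| ≤ ⌈R⌉₊ := by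
      rw [abs_div, abs_of_pos (hε i), div_le_iff₀ (hε i)]
      exact (hSR v hv i).trans (mul_le_mul_of_nonneg_right (Nat.le_ceil R) (hε i).le)
    obtain ⟨hlower, hupper⟩ := abs_le.mp hle
    exact ⟨Int.le_floor.2 (by exact_mod_cast hlower),
      by exact_mod_cast (Int.floor_le (v i / ε i)).trans hupper⟩
  have cell_injOn : Set.InjOn cell S := by
    intro v hv w hw hvw
    refine sub_eq_zero.1 (h _ (L.sub_mem (hSL v hv) (hSL w hw)) fun i => ?_)
    have hlt := Int.abs_sub_lt_one_of_floor_eq_floor (congrFun hvw i)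
    rwa [← sub_div, abs_div, abs_of_pos (hε i), div_lt_one (hε i)] at hlt
  calc S.card ≤ cells.card := Finset.card_le_card_of_injOn cell cell_mem cell_injOn
    _ = (2 * ⌈R⌉₊ + 1) ^ Fintype.card ι := by
      rw [Fintype.card_piFinset, Finset.prod_const, Int.card_Icc, Finset.card_univ]
      congr 1
      omega

end Packing

section ShortestVector

variable {E : Type*} [NormedAddCommGroup E] {L : AddSubgroup E} {b : E}

/-- A shortest nonzero element of `L`. -/
def IsShortestVector (L : AddSubgroup E) (b : E) : Prop :=
  MinimalFor (fun v => v ∈ L ∧ v ≠ 0) norm b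

theorem IsShortestVector.mem (hb : IsShortestVector L b) : b ∈ L := hb.prop.1

theorem IsShortestVector.norm_pos (hb : IsShortestVector L b) : 0 < ‖b‖ := norm_pos_iff.2 hb.prop.2

theorem IsShortestVector.norm_le {v : E} (hb : IsShortestVector L b) (hv : v ∈ L) (hv0 : v ≠ 0) :
    ‖b‖ ≤ ‖v‖ :=
  (le_total ‖b‖ ‖v‖).elim id (hb.le_of_le ⟨hv, hv0⟩)

theorem exists_isShortestVector (hL : L ≠ ⊥)
    (hfin : ∀ R : ℝ, ((L : Set E) ∩ Metric.closedBall 0 R).Finite) :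
    ∃ b, IsShortestVector L b := by
  obtain ⟨v, hv, hv0⟩ := L.bot_or_exists_ne_zero.resolve_left hL
  have hfin' : {w | (w ∈ L ∧ w ≠ 0) ∧ ‖w‖ ≤ ‖v‖}.Finite :=
    (hfin ‖v‖).subset fun w hw => ⟨hw.1.1, mem_closedBall_zero_iff.2 hw.2⟩
  obtain ⟨b, ⟨hb, hbv⟩, hmin⟩ := hfin'.exists_minimalFor norm _ ⟨v, ⟨hv, hv0⟩, le_rfl⟩
  exact ⟨b, hb, fun w hw hwb => hmin ⟨hw, hwb.trans hbv⟩ hwb⟩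

end ShortestVector

section Reduction

theorem exists_abs_apply_eq_norm {ι : Type*} [Fintype ι] [Nonempty ι] (v : ι → ℝ) :
    ∃ p, |v p| = ‖v‖ := by
  obtain ⟨p, hp⟩ := Finite.exists_max fun i => |v i|
  exact ⟨p, (norm_le_pi_norm v p).antisymm ((pi_norm_le_iff_of_nonneg (abs_nonneg _)).2 hp)⟩

/-- `L` is a discrete subgroup spanning `ℝⁿ`, of covolume at least `V`. The covolume is measured
by the determinants of the `n`-tuples in `L`, so that no basis of `L` has to be chosen. -/
structure IsFullLattice {n : ℕ} (L : AddSubgroup (Fin n → ℝ)) (V : ℝ) : Prop where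
  finite_inter_closedBall : ∀ R : ℝ, ((L : Set (Fin n → ℝ)) ∩ Metric.closedBall 0 R).Finite
  span_eq_top : Submodule.span ℝ (L : Set (Fin n → ℝ)) = ⊤
  le_abs_det : ∀ w : Fin n → Fin n → ℝ, (∀ i, w i ∈ L) → (Matrix.of w).det ≠ 0 →
    V ≤ |(Matrix.of w).det|

theorem IsFullLattice.ne_bot {n : ℕ} [NeZero n] {L : AddSubgroup (Fin n → ℝ)} {V : ℝ}
    (hL : IsFullLattice L V) : L ≠ ⊥ := by
  rintro rfl
  have hspan := hL.span_eq_top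
  rw [AddSubgroup.coe_bot, Submodule.span_zero_singleton] at hspan
  exact bot_ne_top hspan

variable {m : ℕ} {b : Fin (m + 1) → ℝ} {p : Fin (m + 1)}

/-- The projection of `ℝᵐ⁺¹` along `b` onto the coordinates different from `p`
(meaningful when `b p ≠ 0`). -/
def projAlong (b : Fin (m + 1) → ℝ) (p : Fin (m + 1)) : (Fin (m + 1) → ℝ) →ₗ[ℝ] (Fin m → ℝ) where
  toFun v i := v (p.succAbove i) - b (p.succAbove i) / b p * v p
  map_add' v w := by
    ext i
    simp only [Pi.add_apply]
    ring
  map_smul' a v := by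
    ext i
    simp only [Pi.smul_apply, smul_eq_mul, RingHom.id_apply]
    ring

theorem projAlong_apply (b : Fin (m + 1) → ℝ) (p : Fin (m + 1)) (v : Fin (m + 1) → ℝ)
    (i : Fin m) :
    projAlong b p v i = v (p.succAbove i) - b (p.succAbove i) / b p * v p :=
  rfl

theorem projAlong_self (hbp : b p ≠ 0) : projAlong b p b = 0 := by
  ext i
  rw [projAlong_apply, div_mul_cancel₀ _ hbp, sub_self, Pi.zero_apply]

theorem projAlong_surjective (b : Fin (m + 1) → ℝ) (p : Fin (m + 1)) :
    Function.Surjective (projAlong b p) := by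
  intro w
  refine ⟨p.insertNth 0 w, ?_⟩
  ext i
  simp [projAlong_apply]

theorem abs_projAlong_sub_le (hp : |b p| = ‖b‖) (v : Fin (m + 1) → ℝ) (i : Fin m) :
    |projAlong b p v i - v (p.succAbove i)| ≤ |v p| := by
  have hratio : |b (p.succAbove i) / b p| ≤ 1 := by
    rw [abs_div, hp]
    exact div_le_one_of_le₀ (norm_le_pi_norm b _) (norm_nonneg b)
  rw [projAlong_apply, sub_sub_cancel_left, abs_neg, abs_mul]
  exact mul_le_of_le_one_left (abs_nonneg _) hratio

theorem abs_projAlong_le (hp : |b p| = ‖b‖) (v : Fin (m + 1) → ℝ) (i : Fin m) :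
    |projAlong b p v i| ≤ |v (p.succAbove i)| + |v p| := by
  linarith [abs_projAlong_sub_le hp v i,
    abs_sub_abs_le_abs_sub (projAlong b p v i) (v (p.succAbove i))]

theorem norm_le_norm_projAlong_add (hp : |b p| = ‖b‖) (v : Fin (m + 1) → ℝ) :
    ‖v‖ ≤ ‖projAlong b p v‖ + |v p| := by
  refine (pi_norm_le_iff_of_nonneg (by positivity)).2 fun i => ?_
  rw [Real.norm_eq_abs]
  rcases Fin.eq_self_or_eq_succAbove p i with rfl | ⟨j, rfl⟩
  · exact le_add_of_nonneg_left (norm_nonneg _)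
  · have hproj : ‖projAlong b p v j‖ ≤ ‖projAlong b p v‖ := norm_le_pi_norm _ j
    rw [Real.norm_eq_abs] at hproj
    have hdiff := abs_projAlong_sub_le hp v j
    rw [abs_sub_comm] at hdiff
    linarith [abs_sub_abs_le_abs_sub (v (p.succAbove j)) (projAlong b p v j)]

theorem abs_det_cons_eq_mul_abs_det_projAlong (hbp : b p ≠ 0) (v : Fin m → Fin (m + 1) → ℝ) :
    |(Matrix.of (Fin.cons b v : Fin (m + 1) → Fin (m + 1) → ℝ)).det| =
      |b p| * |(Matrix.of fun i => projAlong b p (v i)).det| := by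
  let B : Matrix (Fin (m + 1)) (Fin (m + 1)) ℝ :=
    Matrix.of (Fin.cons b v : Fin (m + 1) → Fin (m + 1) → ℝ)
  let c : Fin (m + 1) → ℝ := fun j => if j = p then 0 else -(b j / b p)
  -- Subtracting multiples of column `p` clears the row `b` outside of `p`.
  let A : Matrix (Fin (m + 1)) (Fin (m + 1)) ℝ := Matrix.of fun i j => B i j + c j * B i p
  have hdet : A.det = B.det := by
    rw [← Matrix.det_transpose A, ← Matrix.det_transpose B]
    exact Matrix.det_eq_of_forall_row_eq_smul_add_const c p (if_pos rfl) fun i j => rfl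
  have hrow : ∀ j, j ≠ p → A 0 j = 0 := by
    intro j hj
    simp only [A, B, c, Matrix.of_apply, Fin.cons_zero, if_neg hj]
    field_simp
    ring
  have hpivot : A 0 p = b p := by simp [A, B, c]
  have hminor : A.submatrix Fin.succ p.succAbove = Matrix.of fun i => projAlong b p (v i) := by
    ext i j
    simp only [A, B, c, Matrix.submatrix_apply, Matrix.of_apply, Fin.cons_succ, projAlong_apply,
      if_neg (Fin.succAbove_ne p j)]
    ring
  calc |B.det| = |(-1) ^ (p : ℕ) * A 0 p * (A.submatrix Fin.succ p.succAbove).det| := by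
        rw [← hdet, Matrix.det_succ_row_zero, Finset.sum_eq_single p
          (fun j _ hj => by rw [hrow j hj, mul_zero, zero_mul]) (by simp)]
    _ = |b p| * |(Matrix.of fun i => projAlong b p (v i)).det| := by
        rw [hpivot, hminor, abs_mul, abs_mul, abs_neg_one_pow, one_mul]

theorem exists_lift_of_mem_map_projAlong {L : AddSubgroup (Fin (m + 1) → ℝ)} (hb : b ∈ L)
    (hbp : b p ≠ 0) {w : Fin m → ℝ} (hw : w ∈ L.map (projAlong b p).toAddMonoidHom) :
    ∃ v ∈ L, projAlong b p v = w ∧ |v p| ≤ |b p| / 2 := by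
  obtain ⟨v, hv, rfl⟩ := hw
  refine ⟨v - round (v p / b p) • b, L.sub_mem hv (L.zsmul_mem hb _), ?_, ?_⟩
  · rw [map_sub, map_zsmul, projAlong_self hbp, smul_zero, sub_zero]
    rfl
  · have hcoord : (v - round (v p / b p) • b) p = (v p / b p - round (v p / b p)) * b p := by
      rw [sub_mul, div_mul_cancel₀ _ hbp, Pi.sub_apply, Pi.smul_apply, zsmul_eq_mul]
    rw [hcoord, abs_mul]
    linarith [mul_le_mul_of_nonneg_right (abs_sub_round (v p / b p)) (abs_nonneg (b p))]

theorem IsFullLattice.map_projAlong {L : AddSubgroup (Fin (m + 1) → ℝ)} {V : ℝ}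
    (hL : IsFullLattice L V) (hb : b ∈ L) (hbp : b p ≠ 0) (hp : |b p| = ‖b‖) :
    IsFullLattice (L.map (projAlong b p).toAddMonoidHom) (V / ‖b‖) where
  finite_inter_closedBall R := by
    refine ((hL.finite_inter_closedBall (R + ‖b‖)).image (projAlong b p)).subset ?_
    rintro w ⟨hw, hwR⟩
    obtain ⟨v, hv, rfl, hvp⟩ := exists_lift_of_mem_map_projAlong hb hbp hw
    refine ⟨v, ⟨hv, mem_closedBall_zero_iff.2 ?_⟩, rfl⟩
    linarith [mem_closedBall_zero_iff.1 hwR, norm_le_norm_projAlong_add hp v, norm_nonneg b]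
  span_eq_top := by
    have hcoe : (L.map (projAlong b p).toAddMonoidHom : Set (Fin m → ℝ)) = projAlong b p '' L := rfl
    rw [hcoe, Submodule.span_image, hL.span_eq_top, Submodule.map_top, LinearMap.range_eq_top]
    exact projAlong_surjective b p
  le_abs_det w hw hdet := by
    choose v hv hvw _ using fun i => exists_lift_of_mem_map_projAlong hb hbp (hw i)
    have hcons := abs_det_cons_eq_mul_abs_det_projAlong hbp v
    simp only [hvw] at hcons
    have hmem : ∀ i, (Fin.cons b v : Fin (m + 1) → Fin (m + 1) → ℝ) i ∈ L := Fin.cases hb hv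
    have hdet' : (Matrix.of (Fin.cons b v : Fin (m + 1) → Fin (m + 1) → ℝ)).det ≠ 0 :=
      abs_ne_zero.1 (hcons ▸ mul_ne_zero (abs_ne_zero.2 hbp) (abs_ne_zero.2 hdet))
    rw [div_le_iff₀' (hp ▸ abs_pos.2 hbp), ← hp, ← hcons]
    exact hL.le_abs_det _ hmem hdet'

/-- A box `∏ᵢ [-dᵢ, dᵢ]` adapted to `L` up to the factor `c`: shrunk by `c` it contains no nonzero
element of `L`, and none of its sides is much shorter than the shortest nonzero elements of `L`. -/
structure IsReducedBox {n : ℕ} (L : AddSubgroup (Fin n → ℝ)) (c : ℝ) (d : Fin n → ℝ) : Prop where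
  avoidsBox : AvoidsBox L (c • d)
  exists_norm_le : ∀ i, ∃ w ∈ L, w ≠ 0 ∧ c * ‖w‖ ≤ d i

theorem IsReducedBox.mul_norm_le {n : ℕ} {L : AddSubgroup (Fin n → ℝ)} {c : ℝ} {d b : Fin n → ℝ}
    (hd : IsReducedBox L c d) (hc : 0 ≤ c) (hb : IsShortestVector L b) (i : Fin n) :
    c * ‖b‖ ≤ d i := by
  obtain ⟨w, hw, hw0, hle⟩ := hd.exists_norm_le i
  exact (mul_le_mul_of_nonneg_left (hb.norm_le hw hw0) hc).trans hle

theorem IsShortestVector.norm_le_two_mul_norm_map {L : AddSubgroup (Fin (m + 1) → ℝ)}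
    (hb : IsShortestVector L b) (hp : |b p| = ‖b‖) {w : Fin m → ℝ}
    (hw : w ∈ L.map (projAlong b p).toAddMonoidHom) (hw0 : w ≠ 0) : ‖b‖ ≤ 2 * ‖w‖ := by
  have hbp : b p ≠ 0 := abs_pos.1 (hp ▸ hb.norm_pos)
  obtain ⟨v, hv, rfl, hvp⟩ := exists_lift_of_mem_map_projAlong hb.mem hbp hw
  have hv0 : v ≠ 0 := by
    rintro rfl
    exact hw0 (map_zero _)
  linarith [hb.norm_le hv hv0, norm_le_norm_projAlong_add hp v]

theorem IsReducedBox.insertNth {L : AddSubgroup (Fin (m + 1) → ℝ)} {c : ℝ} {d : Fin m → ℝ}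
    (hc0 : 0 < c) (hc1 : c ≤ 1) (hb : IsShortestVector L b) (hp : |b p| = ‖b‖)
    (hd : IsReducedBox (L.map (projAlong b p).toAddMonoidHom) c d) :
    IsReducedBox L (c ^ 2 / 4) (p.insertNth ‖b‖ d : Fin (m + 1) → ℝ) := by
  have hbpos := hb.norm_pos
  have hside : ∀ i, c * ‖b‖ ≤ 2 * d i := by
    intro i
    obtain ⟨w, hw, hw0, hle⟩ := hd.exists_norm_le i
    linarith [mul_le_mul_of_nonneg_left (hb.norm_le_two_mul_norm_map hp hw hw0) hc0.le]
  have hcsq : c ^ 2 ≤ c := pow_le_of_le_one hc0.le hc1 two_ne_zero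
  refine ⟨fun v hv hvbox => ?_, fun i => ⟨b, hb.mem, hb.prop.2, ?_⟩⟩
  · have hvp : |v p| < c ^ 2 / 4 * ‖b‖ := by simpa using hvbox p
    have hproj : projAlong b p v = 0 := by
      refine hd.avoidsBox _ ⟨v, hv, rfl⟩ fun i => ?_
      have hvi : |v (p.succAbove i)| < c ^ 2 / 4 * d i := by simpa using hvbox (p.succAbove i)
      have hdi : 0 < d i := by nlinarith [hside i]
      calc |projAlong b p v i| ≤ |v (p.succAbove i)| + |v p| := abs_projAlong_le hp v i
        _ < c ^ 2 / 4 * d i + c ^ 2 / 4 * ‖b‖ := add_lt_add hvi hvp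
        _ = c ^ 2 / 4 * d i + c / 4 * (c * ‖b‖) := by ring
        _ ≤ c / 4 * d i + c / 4 * (2 * d i) := by
          linarith [mul_le_mul_of_nonneg_left (hside i) (show 0 ≤ c / 4 by positivity),
            mul_le_mul_of_nonneg_right hcsq hdi.le]
        _ ≤ c * d i := by nlinarith
    by_contra hv0
    have hnorm := norm_le_norm_projAlong_add hp v
    rw [hproj, norm_zero, zero_add] at hnorm
    nlinarith [hb.norm_le hv hv0]
  · rcases Fin.eq_self_or_eq_succAbove p i with rfl | ⟨j, rfl⟩
    · rw [Fin.insertNth_apply_same]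
      nlinarith
    · rw [Fin.insertNth_apply_succAbove]
      nlinarith [hside j]

theorem exists_isReducedBox (n : ℕ) : ∃ c : ℝ, 0 < c ∧ c ≤ 1 ∧
    ∀ (L : AddSubgroup (Fin n → ℝ)) (V : ℝ), IsFullLattice L V →
      ∃ d, IsReducedBox L c d ∧ V ≤ ∏ i, d i ∧
        (L ≠ ⊥ → ∃ b p, IsShortestVector L b ∧ |b p| = ‖b‖ ∧ d p = ‖b‖) := by
  induction n with
  | zero =>
    refine ⟨1, one_pos, le_rfl, fun L V hL => ⟨0, ⟨fun v _ _ => Subsingleton.elim v 0, nofun⟩, ?_,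
      fun hbot => absurd (Subsingleton.elim L ⊥) hbot⟩⟩
    simpa using hL.le_abs_det nofun nofun (by simp)
  | succ m ih =>
    obtain ⟨c, hc0, hc1, hbox⟩ := ih
    refine ⟨c ^ 2 / 4, by positivity, by nlinarith, fun L V hL => ?_⟩
    obtain ⟨b, hb⟩ := exists_isShortestVector hL.ne_bot hL.finite_inter_closedBall
    obtain ⟨p, hp⟩ := exists_abs_apply_eq_norm b
    have hbp : b p ≠ 0 := abs_pos.1 (hp ▸ hb.norm_pos)
    obtain ⟨d, hd, hVd, -⟩ := hbox _ _ (hL.map_projAlong hb.mem hbp hp)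
    refine ⟨p.insertNth ‖b‖ d, hd.insertNth hc0 hc1 hb hp, ?_,
      fun _ => ⟨b, p, hb, hp, Fin.insertNth_apply_same ..⟩⟩
    rw [Fin.prod_univ_succAbove _ p]
    simp only [Fin.insertNth_apply_same, Fin.insertNth_apply_succAbove]
    exact (div_le_iff₀' hb.norm_pos).1 hVd

end Reduction

section Lattices

open scoped Matrix.Norms.Operator

variable {n : ℕ}

theorem SLR.continuous_coe : Continuous fun g : SLR n => (g : Matrix (Fin n) (Fin n) ℝ) :=
  continuous_induced_dom

instance (n : ℕ) : ContinuousMul (SLR n) where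
  continuous_mul := continuous_induced_rng.2 <|
    (SLR.continuous_coe.comp continuous_fst).mul (SLR.continuous_coe.comp continuous_snd)

instance (n : ℕ) : BorelSpace (LatticeSpace n) := ⟨rfl⟩

theorem vecOf_mul (h g : SLR n) (m : Fin n → ℤ) :
    vecOf n (h * g) m = (h : Matrix (Fin n) (Fin n) ℝ) *ᵥ vecOf n g m :=
  (Matrix.mulVec_mulVec _ _ _).symm

theorem inv_mulVec_vecOf (g : SLR n) (m : Fin n → ℤ) :
    ((g⁻¹ : SLR n) : Matrix (Fin n) (Fin n) ℝ) *ᵥ vecOf n g m = fun i => (m i : ℝ) := by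
  rw [← vecOf_mul, inv_mul_cancel]
  exact Matrix.one_mulVec _

theorem vecOf_map_intCast (γ : Matrix.SpecialLinearGroup (Fin n) ℤ) (m : Fin n → ℤ) :
    vecOf n (Matrix.SpecialLinearGroup.map (Int.castRingHom ℝ) γ) m =
      fun i => (((γ : Matrix (Fin n) (Fin n) ℤ) *ᵥ m) i : ℝ) :=
  (funext (RingHom.map_mulVec (Int.castRingHom ℝ) _ m)).symm

/-- The lattice `g ℤⁿ`, as a subgroup of `ℝⁿ`. -/
def latticeOf (g : SLR n) : AddSubgroup (Fin n → ℝ) :=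
  ((g : Matrix (Fin n) (Fin n) ℝ).mulVecLin.toAddMonoidHom.comp
    ((Int.castAddHom ℝ).compLeft (Fin n))).range

theorem mem_latticeOf {g : SLR n} {v : Fin n → ℝ} : v ∈ latticeOf g ↔ ∃ m, vecOf n g m = v :=
  Iff.rfl

theorem mem_latticeOf_mul {h g : SLR n} {v : Fin n → ℝ} :
    v ∈ latticeOf (h * g) ↔ ∃ w ∈ latticeOf g, (h : Matrix (Fin n) (Fin n) ℝ) *ᵥ w = v := by
  simp only [mem_latticeOf, vecOf_mul, exists_exists_eq_and]

theorem latticeOf_mul_le_of_mem_latticeGamma (g : SLR n) {γ : SLR n} (hγ : γ ∈ latticeGamma n) :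
    latticeOf (g * γ) ≤ latticeOf g := by
  obtain ⟨γ, rfl⟩ := hγ
  intro v hv
  obtain ⟨m, rfl⟩ := mem_latticeOf.1 hv
  exact mem_latticeOf.2 ⟨(γ : Matrix (Fin n) (Fin n) ℤ) *ᵥ m,
    by rw [vecOf_mul, vecOf_map_intCast, vecOf]⟩

theorem latticeOf_mul_of_mem_latticeGamma (g : SLR n) {γ : SLR n} (hγ : γ ∈ latticeGamma n) :
    latticeOf (g * γ) = latticeOf g := by
  refine (latticeOf_mul_le_of_mem_latticeGamma g hγ).antisymm ?_
  simpa only [mul_inv_cancel_right] using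
    latticeOf_mul_le_of_mem_latticeGamma (g * γ) (inv_mem hγ)

theorem finite_latticeOf_inter_closedBall (g : SLR n) (R : ℝ) :
    ((latticeOf g : Set (Fin n → ℝ)) ∩ Metric.closedBall 0 R).Finite := by
  let K : ℝ := ‖((g⁻¹ : SLR n) : Matrix (Fin n) (Fin n) ℝ)‖
  refine ((Set.Finite.pi' fun _ : Fin n => Set.finite_Icc (-⌈K * R⌉) ⌈K * R⌉).image
    (vecOf n g)).subset ?_
  rintro _ ⟨⟨m, rfl⟩, hR⟩
  refine ⟨m, fun i => abs_le.1 ?_, rfl⟩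
  have hcoord : (|m i| : ℝ) ≤ ⌈K * R⌉ :=
    calc (|m i| : ℝ) ≤ ‖((g⁻¹ : SLR n) : Matrix (Fin n) (Fin n) ℝ) *ᵥ vecOf n g m‖ := by
          rw [inv_mulVec_vecOf]
          exact norm_le_pi_norm (fun i => (m i : ℝ)) i
      _ ≤ K * ‖vecOf n g m‖ := Matrix.linfty_opNorm_mulVec _ _
      _ ≤ K * R := by gcongr; exact mem_closedBall_zero_iff.1 hR
      _ ≤ ⌈K * R⌉ := Int.le_ceil _
  exact_mod_cast hcoord

theorem span_latticeOf (g : SLR n) : Submodule.span ℝ (latticeOf g : Set (Fin n → ℝ)) = ⊤ := by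
  classical
  have hcol : Set.range (g : Matrix (Fin n) (Fin n) ℝ).col ⊆ latticeOf g := by
    rintro _ ⟨j, rfl⟩
    refine mem_latticeOf.2 ⟨Pi.single j 1, ?_⟩
    rw [vecOf, ← Matrix.mulVec_single_one]
    congr 1
    ext i
    simp [Pi.single_apply]
  refine top_unique (le_trans (top_le_iff.2 ?_) (Submodule.span_mono hcol))
  rw [← Matrix.range_mulVecLin, LinearMap.range_eq_top]
  exact Matrix.mulVec_surjective_iff_isUnit.2 ((Matrix.isUnit_iff_isUnit_det _).2 (by simp [g.2]))

theorem one_le_abs_det_of_mem_latticeOf (g : SLR n) {w : Fin n → Fin n → ℝ}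
    (hw : ∀ i, w i ∈ latticeOf g) (hdet : (Matrix.of w).det ≠ 0) : 1 ≤ |(Matrix.of w).det| := by
  choose m hm using fun i => mem_latticeOf.1 (hw i)
  have hfactor : Matrix.of w = (Matrix.of m).map (Int.cast : ℤ → ℝ) *
      (g : Matrix (Fin n) (Fin n) ℝ)ᵀ := by
    ext i j
    simp [← hm, vecOf, Matrix.mulVec, dotProduct, Matrix.mul_apply, mul_comm]
  have hint : (Matrix.of w).det = ((Matrix.of m).det : ℝ) := by
    rw [hfactor, Matrix.det_mul, Matrix.det_transpose, g.2, mul_one, Int.cast_det]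
  rw [hint] at hdet ⊢
  exact_mod_cast Int.one_le_abs (by exact_mod_cast hdet)

theorem isFullLattice_latticeOf (g : SLR n) : IsFullLattice (latticeOf g) 1 where
  finite_inter_closedBall := finite_latticeOf_inter_closedBall g
  span_eq_top := span_latticeOf g
  le_abs_det _ := one_le_abs_det_of_mem_latticeOf g

/-- The points of the lattice represented by a coset in `SL(n, ℝ) / SL(n, ℤ)`. -/
def LatticeSpace.points (Λ : LatticeSpace n) : AddSubgroup (Fin n → ℝ) :=
  Quotient.liftOn' Λ latticeOf fun g h hgh => by
    rw [← mul_inv_cancel_left g h,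
      latticeOf_mul_of_mem_latticeGamma g (QuotientGroup.leftRel_apply.1 hgh)]

namespace LatticeSpace

theorem points_mk (g : SLR n) : points (QuotientGroup.mk g : LatticeSpace n) = latticeOf g := rfl

theorem mem_points_smul {h : SLR n} {Λ : LatticeSpace n} {v : Fin n → ℝ} :
    v ∈ points (h • Λ) ↔ ∃ w ∈ points Λ, (h : Matrix (Fin n) (Fin n) ℝ) *ᵥ w = v := by
  induction Λ using QuotientGroup.induction_on with
  | H g => exact mem_latticeOf_mul

theorem isFullLattice_points (Λ : LatticeSpace n) : IsFullLattice (points Λ) 1 := by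
  induction Λ using QuotientGroup.induction_on with
  | H g => exact isFullLattice_latticeOf g

theorem isOpen_setOf_exists_mem_points {U : Set (Fin n → ℝ)} (hU : IsOpen U) :
    IsOpen {Λ : LatticeSpace n | ∃ v ∈ points Λ, v ∈ U} := by
  rw [← (QuotientGroup.isQuotientMap_mk (N := latticeGamma n)).isOpen_preimage]
  have hpreimage : (QuotientGroup.mk ⁻¹' {Λ : LatticeSpace n | ∃ v ∈ points Λ, v ∈ U} :
      Set (SLR n)) = ⋃ m, (fun g => vecOf n g m) ⁻¹' U := by
    ext g
    simp [points_mk, mem_latticeOf]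
  rw [hpreimage]
  exact isOpen_iUnion fun m => hU.preimage (SLR.continuous_coe.matrix_mulVec continuous_const)

theorem isClosed_setOf_avoidsBox (ε : Fin n → ℝ) :
    IsClosed {Λ : LatticeSpace n | AvoidsBox (points Λ) ε} := by
  have hU : IsOpen ({v : Fin n → ℝ | ∀ i, |v i| < ε i} ∩ {0}ᶜ) := by
    refine IsOpen.inter ?_ isOpen_compl_singleton
    simp only [Set.ofPred_forall]
    exact isOpen_iInter_of_finite fun i => isOpen_lt (by fun_prop) continuous_const
  convert (isOpen_setOf_exists_mem_points hU).isClosed_compl using 1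
  ext Λ
  simp [AvoidsBox]

end LatticeSpace

end Lattices

section Averaging

theorem card_mul_measure_le_of_smul_mem {ι G X : Type*} [SMul G X] [MeasurableSpace X]
    [MeasurableConstSMul G X] {μ : Measure X} [SMulInvariantMeasure G X μ] {A : Finset ι}
    (g : ι → G) {T : Set X} (hT : MeasurableSet T) {N : ℕ}
    (hN : ∀ x, ∀ S ⊆ A, (∀ a ∈ S, g a • x ∈ T) → S.card ≤ N) :
    A.card * μ T ≤ N * μ Set.univ := by
  classical
  have hmeas : ∀ a, MeasurableSet ((g a • ·) ⁻¹' T) := fun a =>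
    hT.preimage (measurable_const_smul _)
  have hcount : ∀ x, ∑ a ∈ A, ((g a • ·) ⁻¹' T).indicator (1 : X → ℝ≥0∞) x =
      (A.filter fun a => g a • x ∈ T).card := by
    simp [Set.indicator_apply]
  calc A.card * μ T = ∑ a ∈ A, μ ((g a • ·) ⁻¹' T) := by
        simp [SMulInvariantMeasure.measure_preimage_smul _ hT]
    _ = ∫⁻ x, ∑ a ∈ A, ((g a • ·) ⁻¹' T).indicator 1 x ∂μ := by
        rw [lintegral_finsetSum _ fun a _ => measurable_one.indicator (hmeas a)]
        simp only [lintegral_indicator_one (hmeas _)]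
    _ ≤ ∫⁻ _, N ∂μ := lintegral_mono fun x => by
        rw [hcount]
        exact Nat.cast_le.2 <|
          hN x _ (Finset.filter_subset _ _) fun a ha => (Finset.mem_filter.1 ha).2
    _ = N * μ Set.univ := lintegral_const _

end Averaging

section Tubes

open LatticeSpace

variable {n : ℕ} {c x J : ℝ} {p : Fin n} {D a : Fin n → ℝ} {Λ : LatticeSpace n}

/-- The shear `v ↦ v + v p • a` of `ℝⁿ`, where the coordinate `a p` is replaced by `0`. -/
def shear (p : Fin n) (a : Fin n → ℝ) : SLR n :=
  ⟨1 + Matrix.vecMulVec (Function.update a p 0) (Pi.single p 1), by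
    simp [Matrix.vecMulVec_eq Unit, Matrix.det_one_add_replicateCol_mul_replicateRow]⟩

theorem shear_mulVec (ha : a p = 0) (v : Fin n → ℝ) :
    (shear p a : Matrix (Fin n) (Fin n) ℝ) *ᵥ v = v + v p • a := by
  have hupdate : Function.update a p 0 = a := Function.update_eq_self_iff.2 ha.symm
  ext i
  simp [shear, hupdate, Matrix.add_mulVec, Matrix.vecMulVec_mulVec, mul_comm]

theorem mem_points_shear_smul (ha : a p = 0) {v : Fin n → ℝ} :
    v ∈ points (shear p a • Λ) ↔ ∃ w ∈ points Λ, w + w p • a = v := by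
  simp only [mem_points_smul, shear_mulVec ha]

theorem AvoidsBox.of_shear_smul {ε : Fin n → ℝ} {K : ℝ} (ha : a p = 0)
    (hK : 0 ≤ K) (haK : ∀ i, |a i| * ε p ≤ K * ε i)
    (h : AvoidsBox (points (shear p a • Λ)) ε) : AvoidsBox (points Λ) ((1 + K)⁻¹ • ε) := by
  intro v hv hvbox
  have hsmall : ∀ i, (1 + K) * |v i| < ε i := fun i => by
    rw [← lt_inv_mul_iff₀ (by positivity)]
    exact hvbox i
  have hzero : v + v p • a = 0 := by
    refine h _ ((mem_points_shear_smul ha).2 ⟨v, hv, rfl⟩) fun i => ?_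
    have hshear : (1 + K) * (|v p| * |a i|) ≤ K * ε i := by
      linarith [mul_le_mul_of_nonneg_right (hsmall p).le (abs_nonneg (a i)), haK i]
    have habs : |(v + v p • a) i| ≤ |v i| + |v p| * |a i| := by
      simpa only [Pi.add_apply, Pi.smul_apply, smul_eq_mul, abs_mul] using
        abs_add_le (v i) (v p * a i)
    nlinarith [hsmall i]
  have hvp : v p = 0 := by simpa [ha] using congrFun hzero p
  simpa [hvp] using hzero

/-- The lattices which avoid the box with sides `c • D` and have a point in a tube of length and
radius comparable to `x` around the `p`-th coordinate axis. -/
def tubeEvent (c x : ℝ) (p : Fin n) (D : Fin n → ℝ) : Set (LatticeSpace n) :=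
  {Λ | AvoidsBox (points Λ) (c • D) ∧ ∃ v ∈ points Λ, x / 2 < |v p| ∧ ‖v‖ < 2 * x}

theorem measurableSet_tubeEvent : MeasurableSet (tubeEvent c x p D) := by
  refine (isClosed_setOf_avoidsBox _).measurableSet.inter
    (isOpen_setOf_exists_mem_points (U := {v | x / 2 < |v p| ∧ ‖v‖ < 2 * x}) ?_).measurableSet
  exact (isOpen_lt continuous_const (continuous_apply p).abs).inter
    (isOpen_lt continuous_norm continuous_const)

theorem exists_mem_points_of_shear_smul_mem_tubeEvent (ha : a p = 0)
    (h : shear p a • Λ ∈ tubeEvent c x p D) :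
    ∃ v ∈ points Λ, x / 2 < |v p| ∧ |v p| < 2 * x ∧ ‖v + v p • a‖ < 2 * x := by
  obtain ⟨-, w, hw, hwp, hwx⟩ := h
  obtain ⟨v, hv, rfl⟩ := (mem_points_shear_smul ha).1 hw
  have hvp : (v + v p • a) p = v p := by simp [ha]
  rw [hvp] at hwp
  exact ⟨v, hv, hwp, hvp ▸ (norm_le_pi_norm _ p).trans_lt hwx, hwx⟩

theorem eq_of_norm_add_smul_lt {v : Fin n → ℝ} {a b : Fin n → ℕ} (hvp : x / 2 < |v p|)
    (ha : ‖v + v p • fun i => 8 * (a i : ℝ)‖ < 2 * x)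
    (hb : ‖v + v p • fun i => 8 * (b i : ℝ)‖ < 2 * x) : a = b := by
  ext i
  by_contra hne
  have hsep : (1 : ℝ) ≤ |(a i : ℝ) - b i| := by
    exact_mod_cast Int.one_le_abs (sub_ne_zero.2 (Nat.cast_injective.ne hne : (a i : ℤ) ≠ b i))
  have hdist : |v p| * (8 * |(a i : ℝ) - b i|) < 4 * x :=
    calc |v p| * (8 * |(a i : ℝ) - b i|)
        = |(v i + v p * (8 * a i)) - (v i + v p * (8 * b i))| := by
          rw [add_sub_add_left_eq_sub, ← mul_sub, ← mul_sub, abs_mul, abs_mul,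
            abs_of_pos (by norm_num : (0 : ℝ) < 8)]
      _ ≤ |v i + v p * (8 * a i)| + |v i + v p * (8 * b i)| := abs_sub _ _
      _ < 2 * x + 2 * x :=
          add_lt_add ((norm_le_pi_norm _ i).trans_lt ha) ((norm_le_pi_norm _ i).trans_lt hb)
      _ = 4 * x := by ring
  nlinarith [abs_nonneg (v p)]

/-- A bound for the number of sheared copies of a tube event which contain a given lattice. -/
def shearMultiplicity (n : ℕ) (c J : ℝ) : ℕ := (2 * ⌈(2 * J + 16) / (9⁻¹ * c)⌉₊ + 1) ^ n

theorem card_le_shearMultiplicity (hc : 0 < c) (hD : ∀ i, 0 < D i)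
    (hDJ : ∀ i, x ≤ J * D i) (hDp : D p ≤ x) {S : Finset (Fin n → ℕ)}
    (hSp : ∀ a ∈ S, a p = 0) (hSD : ∀ a ∈ S, ∀ i, a i * x ≤ D i)
    (hS : ∀ a ∈ S, shear p (fun i => 8 * (a i : ℝ)) • Λ ∈ tubeEvent c x p D) :
    S.card ≤ shearMultiplicity n c J := by
  classical
  obtain rfl | ⟨a₀, ha₀⟩ := S.eq_empty_or_nonempty
  · exact Nat.zero_le _
  have hSp' : ∀ a ∈ S, 8 * (a p : ℝ) = 0 := fun a ha => by simp [hSp a ha]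
  have havoid : AvoidsBox (points Λ) ((9⁻¹ * c) • D) := by
    rw [mul_smul, show (9 : ℝ) = 1 + 8 by norm_num]
    refine (hS a₀ ha₀).1.of_shear_smul (hSp' a₀ ha₀) (by norm_num) fun i => ?_
    rw [abs_of_nonneg (by positivity), Pi.smul_apply, Pi.smul_apply, smul_eq_mul, smul_eq_mul]
    have hDi : a₀ i * D p ≤ D i := (mul_le_mul_of_nonneg_left hDp (by positivity)).trans
      (hSD a₀ ha₀ i)
    nlinarith
  choose! v hv hvp hvp' hvx using
    fun a ha => exists_mem_points_of_shear_smul_mem_tubeEvent (hSp' a ha) (hS a ha)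
  have hinj : Set.InjOn v S := fun a ha b hb hab =>
    eq_of_norm_add_smul_lt (hvp a ha) (hvx a ha) (hab ▸ hvx b hb)
  have hbound : ∀ a ∈ S, ∀ i, |v a i| ≤ (2 * J + 16) * D i := by
    intro a ha i
    have hshear : |v a i + v a p * (8 * a i)| < 2 * x := (norm_le_pi_norm _ i).trans_lt (hvx a ha)
    have habs := abs_sub (v a i + v a p * (8 * a i)) (v a p * (8 * a i))
    rw [add_sub_cancel_right, abs_mul, abs_of_nonneg (by positivity : 0 ≤ 8 * (a i : ℝ))] at habs
    have hvpa : |v a p| * (8 * a i) ≤ 2 * x * (8 * a i) := by gcongr; exact (hvp' a ha).le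
    linarith [hSD a ha i, hDJ i]
  rw [← Finset.card_image_of_injOn hinj]
  have hpos : ∀ i, 0 < ((9⁻¹ * c) • D) i := fun i => mul_pos (by positivity) (hD i)
  have hmem : ∀ w ∈ S.image v, w ∈ points Λ := Finset.forall_mem_image.2 hv
  refine (havoid.card_le (R := (2 * J + 16) / (9⁻¹ * c)) hpos hmem ?_).trans_eq
    (by rw [Fintype.card_fin, shearMultiplicity])
  refine Finset.forall_mem_image.2 fun a ha i => (hbound a ha i).trans_eq ?_
  rw [Pi.smul_apply, smul_eq_mul, ← mul_assoc, div_mul_cancel₀ _ (by positivity)]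

theorem measure_tubeEvent_le {μ : Measure (LatticeSpace n)}
    [SMulInvariantMeasure (SLR n) (LatticeSpace n) μ] (hc : 0 < c) (hx : 0 < x)
    (hD : ∀ i, 0 < D i) (hDJ : ∀ i, x ≤ J * D i) (hDp : D p ≤ x) :
    μ (tubeEvent c x p D) ≤
      shearMultiplicity n c J * μ Set.univ * ENNReal.ofReal (∏ i, x / D i) := by
  let A : Finset (Fin n → ℕ) := Fintype.piFinset fun i => Finset.range ⌈D i / x⌉₊
  have hAD : ∀ a ∈ A, ∀ i, a i * x < D i := fun a ha i => by
    rw [← lt_div_iff₀ hx, ← Nat.lt_ceil]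
    exact Finset.mem_range.1 (Fintype.mem_piFinset.1 ha i)
  have hAp : ∀ a ∈ A, a p = 0 := fun a ha => by
    have hlt : (a p : ℝ) < 1 := lt_of_mul_lt_mul_right (by linarith [hAD a ha p]) hx.le
    exact Nat.lt_one_iff.1 (by exact_mod_cast hlt)
  have hcard : ∏ i, D i / x ≤ A.card := by
    rw [Fintype.card_piFinset, Nat.cast_prod]
    refine Finset.prod_le_prod (fun i _ => (div_pos (hD i) hx).le) fun i _ => ?_
    rw [Finset.card_range]
    exact Nat.le_ceil _
  have hpack : A.card * μ (tubeEvent c x p D) ≤ shearMultiplicity n c J * μ Set.univ := by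
    refine card_mul_measure_le_of_smul_mem (G := SLR n) (fun a => shear p fun i => 8 * (a i : ℝ))
      measurableSet_tubeEvent fun Λ S hSA hS => ?_
    exact card_le_shearMultiplicity hc hD hDJ hDp (fun a ha => hAp a (hSA ha))
      (fun a ha i => (hAD a (hSA ha) i).le) hS
  have hprod : 0 < ∏ i, D i / x := Finset.prod_pos fun i _ => div_pos (hD i) hx
  have hinv : ∏ i, x / D i = (∏ i, D i / x)⁻¹ := by
    simp only [← Finset.prod_inv_distrib, inv_div]
  have hcard' : ENNReal.ofReal (∏ i, D i / x) ≤ A.card := by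
    simpa only [ENNReal.ofReal_natCast] using ENNReal.ofReal_le_ofReal hcard
  rw [hinv, ENNReal.ofReal_inv_of_pos hprod, ← div_eq_mul_inv,
    ENNReal.le_div_iff_mul_le (.inl (by simpa using hprod)) (.inl ENNReal.ofReal_ne_top), mul_comm]
  exact (mul_le_mul_left hcard' _).trans hpack

end Tubes

section ShortVectors

open LatticeSpace

variable {n : ℕ} {c x θ : ℝ}

/-- The lattices with a nonzero vector of sup norm at most `x`. -/
def shortVectorEvent (n : ℕ) (x : ℝ) : Set (LatticeSpace n) :=
  {Λ | ∃ v ∈ points Λ, v ≠ 0 ∧ ‖v‖ ≤ x}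

theorem notMem_shortVectorEvent {Λ : LatticeSpace n} :
    Λ ∉ shortVectorEvent n x ↔ ∀ v ∈ points Λ, v ≠ 0 → x < ‖v‖ := by
  simp [shortVectorEvent]

theorem shortVectorEvent_zero : shortVectorEvent n 0 = ∅ :=
  Set.eq_empty_of_forall_notMem fun _ =>
    notMem_shortVectorEvent.2 fun _ _ hv0 => norm_pos_iff.2 hv0

theorem shortVectorEvent_subset_iUnion_diff :
    shortVectorEvent n x ⊆
      ⋃ j : ℕ, shortVectorEvent n (x / 2 ^ j) \ shortVectorEvent n (x / 2 ^ j / 2) := by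
  rintro Λ ⟨v, hv, hv0, hvx⟩
  have hbot : points Λ ≠ ⊥ := fun hbot => hv0 (by simpa [hbot] using hv)
  obtain ⟨b, hb⟩ := exists_isShortestVector hbot (isFullLattice_points Λ).finite_inter_closedBall
  obtain ⟨j, hj, hj'⟩ := exists_nat_pow_near
    ((one_le_div hb.norm_pos).2 ((hb.norm_le hv hv0).trans hvx)) one_lt_two
  rw [le_div_comm₀ (by positivity) hb.norm_pos] at hj
  rw [div_lt_comm₀ hb.norm_pos (by positivity), pow_succ, ← div_div] at hj'
  exact Set.mem_iUnion.2 ⟨j, ⟨b, hb.mem, hb.prop.2, hj⟩,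
    notMem_shortVectorEvent.2 fun w hw hw0 => hj'.trans_le (hb.norm_le hw hw0)⟩

/-- The side lengths of the boxes used to cover the space of lattices: the smallest possible length
`c * x / 2`, times powers of two. -/
def dyadicBox (c x : ℝ) (e : Fin n → ℕ) (i : Fin n) : ℝ := c * x / 2 * 2 ^ e i

theorem exists_mem_tubeEvent_dyadicBox (n : ℕ) : ∃ c : ℝ, 0 < c ∧
    ∀ (x : ℝ), 0 < x → ∀ Λ ∈ shortVectorEvent n x \ shortVectorEvent n (x / 2),
      ∃ (p : Fin n) (e : Fin n → ℕ), dyadicBox c x e p ≤ x ∧ 1 ≤ ∏ i, 2 * dyadicBox c x e i ∧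
        Λ ∈ tubeEvent c x p (dyadicBox c x e) := by
  obtain ⟨c, hc0, -, hbox⟩ := exists_isReducedBox n
  refine ⟨c, hc0, fun x hx Λ ⟨⟨v, hv, hv0, hvx⟩, hΛ⟩ => ?_⟩
  rw [notMem_shortVectorEvent] at hΛ
  obtain ⟨d, hd, hvol, hshort⟩ := hbox _ _ (isFullLattice_points Λ)
  obtain ⟨b, p, hb, hbp, hdp⟩ := hshort fun hbot => hv0 (by simpa [hbot] using hv)
  have hbx : ‖b‖ ≤ x := (hb.norm_le hv hv0).trans hvx
  have hxb : x / 2 < ‖b‖ := hΛ b hb.mem hb.prop.2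
  have hside : ∀ i, c * x / 2 ≤ d i := fun i => by
    linarith [hd.mul_norm_le hc0.le hb i, mul_le_mul_of_nonneg_left hxb.le hc0.le]
  have hpos : 0 < c * x / 2 := by positivity
  choose e hle hlt using fun i => exists_nat_pow_near ((one_le_div hpos).2 (hside i)) one_lt_two
  have hed : ∀ i, dyadicBox c x e i ≤ d i := fun i => (le_div_iff₀' hpos).1 (hle i)
  have hde : ∀ i, d i ≤ 2 * dyadicBox c x e i := fun i => by
    have hlti := (div_lt_iff₀' hpos).1 (hlt i)
    rw [pow_succ] at hlti
    unfold dyadicBox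
    linarith
  refine ⟨p, e, (hed p).trans (hdp.trans_le hbx), hvol.trans ?_, ?_, b, hb.mem, ?_, ?_⟩
  · exact Finset.prod_le_prod (fun i _ => hpos.le.trans (hside i)) fun i _ => hde i
  · exact hd.avoidsBox.mono fun i => mul_le_mul_of_nonneg_left (hed i) hc0.le
  · rwa [hbp]
  · linarith

theorem prod_div_dyadicBox_le (hc : 0 < c) (hx : 0 < x) (hθ : 0 ≤ θ) {e : Fin n → ℕ}
    (he : 1 ≤ ∏ i, 2 * dyadicBox c x e i) :
    ∏ i, x / dyadicBox c x e i ≤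
      (2 / c) ^ n * c ^ (θ * n) * x ^ (θ * n) * ∏ i, ((2 : ℝ) ^ (θ - 1)) ^ e i := by
  have hpos : ∀ i, 0 < dyadicBox c x e i := fun i => by unfold dyadicBox; positivity
  have hfactor : ∀ i, x / dyadicBox c x e i * (2 * dyadicBox c x e i) ^ θ =
      2 / c * (c ^ θ * x ^ θ) * ((2 : ℝ) ^ (θ - 1)) ^ e i := by
    intro i
    have hdouble : 2 * dyadicBox c x e i = c * x * 2 ^ e i := by unfold dyadicBox; ring
    rw [hdouble, Real.mul_rpow (by positivity) (by positivity), Real.mul_rpow hc.le hx.le,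
      Real.rpow_sub_one two_ne_zero, div_pow, Real.rpow_pow_comm two_pos.le, dyadicBox]
    field_simp
  -- The factor `(∏ i, 2 * dyadicBox c x e i) ^ θ ≥ 1` turns `(1 / 2) ^ e i` into
  -- `(2 ^ (θ - 1)) ^ e i` and produces the power of `x`.
  calc ∏ i, x / dyadicBox c x e i
      ≤ (∏ i, x / dyadicBox c x e i) * (∏ i, 2 * dyadicBox c x e i) ^ θ :=
        le_mul_of_one_le_right (Finset.prod_nonneg fun i _ => (div_pos hx (hpos i)).le)
          (Real.one_le_rpow he hθ)
    _ = ∏ i, x / dyadicBox c x e i * (2 * dyadicBox c x e i) ^ θ := by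
        rw [← Real.finsetProd_rpow _ _ fun i _ => (mul_pos two_pos (hpos i)).le,
          Finset.prod_mul_distrib]
    _ = (2 / c) ^ n * c ^ (θ * n) * x ^ (θ * n) * ∏ i, ((2 : ℝ) ^ (θ - 1)) ^ e i := by
        simp only [hfactor, Finset.prod_mul_distrib, Finset.prod_const, Finset.card_univ,
          Fintype.card_fin, Real.rpow_mul_natCast hc.le, Real.rpow_mul_natCast hx.le, mul_assoc]

theorem tsum_pi_prod {α : Type*} {n : ℕ} (f : Fin n → α → ℝ≥0∞) :
    ∑' e : Fin n → α, ∏ i, f i (e i) = ∏ i, ∑' a, f i a := by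
  induction n with
  | zero => simp
  | succ m ih =>
    rw [← (Fin.consEquiv fun _ : Fin (m + 1) => α).tsum_eq, ENNReal.tsum_prod']
    simp only [Fin.consEquiv, Equiv.coe_fn_mk, Fin.prod_univ_succ, Fin.cons_zero, Fin.cons_succ,
      ENNReal.tsum_mul_left, ENNReal.tsum_mul_right, ih fun i => f i.succ]

theorem measure_tubeEvent_dyadicBox_le {μ : Measure (LatticeSpace n)}
    [SMulInvariantMeasure (SLR n) (LatticeSpace n) μ] (hc : 0 < c) (hx : 0 < x) (hθ : 0 ≤ θ)
    {p : Fin n} {e : Fin n → ℕ} (hp : dyadicBox c x e p ≤ x) (he : 1 ≤ ∏ i, 2 * dyadicBox c x e i) :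
    μ (tubeEvent c x p (dyadicBox c x e)) ≤
      shearMultiplicity n c (2 / c) * μ Set.univ * (ENNReal.ofReal ((2 / c) ^ n * c ^ (θ * n)) *
        ENNReal.ofReal (x ^ (θ * n)) * ∏ i, ENNReal.ofReal (((2 : ℝ) ^ (θ - 1)) ^ e i)) := by
  have hpos : ∀ i, 0 < dyadicBox c x e i := fun i => by unfold dyadicBox; positivity
  have hratio : ∀ i, x ≤ 2 / c * dyadicBox c x e i := fun i => by
    have hdouble : 2 / c * dyadicBox c x e i = x * 2 ^ e i := by
      unfold dyadicBox
      field_simp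
    rw [hdouble]
    exact le_mul_of_one_le_right hx.le (one_le_pow₀ one_le_two)
  refine (measure_tubeEvent_le hc hx hpos hratio hp).trans (mul_le_mul_right ?_ _)
  rw [← ENNReal.ofReal_mul (by positivity),
    ← ENNReal.ofReal_prod_of_nonneg fun i _ => by positivity, ← ENNReal.ofReal_mul (by positivity)]
  exact ENNReal.ofReal_le_ofReal (prod_div_dyadicBox_le hc hx hθ he)

theorem exists_measure_shortVectorEvent_diff_le (μ : Measure (LatticeSpace n)) [IsFiniteMeasure μ]
    [SMulInvariantMeasure (SLR n) (LatticeSpace n) μ] (hθ0 : 0 ≤ θ) (hθ1 : θ < 1) :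
    ∃ C : ℝ≥0∞, C ≠ ∞ ∧ ∀ x, 0 < x →
      μ (shortVectorEvent n x \ shortVectorEvent n (x / 2)) ≤ C * ENNReal.ofReal (x ^ (θ * n)) := by
  obtain ⟨c, hc, hcover⟩ := exists_mem_tubeEvent_dyadicBox n
  let q : ℝ := 2 ^ (θ - 1)
  have hq : q < 1 := Real.rpow_lt_one_of_one_lt_of_neg one_lt_two (by linarith)
  let B : ℝ≥0∞ := shearMultiplicity n c (2 / c) * μ Set.univ
  let B' : ℝ≥0∞ := ENNReal.ofReal ((2 / c) ^ n * c ^ (θ * n))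
  have hsum : ∑' k : ℕ, ENNReal.ofReal (q ^ k) ≠ ∞ :=
    (summable_geometric_of_lt_one (by positivity) hq).tsum_ofReal_ne_top
  refine ⟨n * B * B' * (∑' k : ℕ, ENNReal.ofReal (q ^ k)) ^ n, by finiteness, fun x hx => ?_⟩
  let T : Fin n → (Fin n → ℕ) → Set (LatticeSpace n) := fun p e =>
    {Λ | dyadicBox c x e p ≤ x ∧ 1 ≤ ∏ i, 2 * dyadicBox c x e i ∧
      Λ ∈ tubeEvent c x p (dyadicBox c x e)}
  have hT : ∀ p e, μ (T p e) ≤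
      B * (B' * ENNReal.ofReal (x ^ (θ * n)) * ∏ i, ENNReal.ofReal (q ^ e i)) := by
    intro p e
    by_cases hpe : dyadicBox c x e p ≤ x ∧ 1 ≤ ∏ i, 2 * dyadicBox c x e i
    · exact (measure_mono fun Λ hΛ => hΛ.2.2).trans
        (measure_tubeEvent_dyadicBox_le hc hx hθ0 hpe.1 hpe.2)
    · rw [Set.eq_empty_of_forall_notMem fun Λ (hΛ : Λ ∈ T p e) => hpe ⟨hΛ.1, hΛ.2.1⟩, measure_empty]
      exact zero_le
  calc μ (shortVectorEvent n x \ shortVectorEvent n (x / 2)) ≤ μ (⋃ p, ⋃ e, T p e) :=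
        measure_mono fun Λ hΛ => by
          obtain ⟨p, e, hpe⟩ := hcover x hx Λ hΛ
          exact Set.mem_iUnion₂.2 ⟨p, e, hpe⟩
    _ ≤ ∑' (p) (e), μ (T p e) :=
        (measure_iUnion_le _).trans (ENNReal.tsum_le_tsum fun p => measure_iUnion_le _)
    _ ≤ ∑' (_ : Fin n) (e : Fin n → ℕ),
          B * (B' * ENNReal.ofReal (x ^ (θ * n)) * ∏ i, ENNReal.ofReal (q ^ e i)) :=
        ENNReal.tsum_le_tsum fun p => ENNReal.tsum_le_tsum (hT p)
    _ = n * B * B' * (∑' k : ℕ, ENNReal.ofReal (q ^ k)) ^ n * ENNReal.ofReal (x ^ (θ * n)) := by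
        simp only [ENNReal.tsum_mul_left, tsum_pi_prod fun _ k => ENNReal.ofReal (q ^ k),
          tsum_fintype, Finset.prod_const, Finset.sum_const, Finset.card_univ, Fintype.card_fin,
          nsmul_eq_mul]
        ring

theorem exists_measure_shortVectorEvent_le (hn : n ≠ 0) (μ : Measure (LatticeSpace n))
    [IsFiniteMeasure μ] [SMulInvariantMeasure (SLR n) (LatticeSpace n) μ] (hθ0 : 0 < θ)
    (hθ1 : θ < 1) :
    ∃ C : ℝ≥0∞, C ≠ ∞ ∧ ∀ r, 0 ≤ r →
      μ (shortVectorEvent n r) ≤ C * ENNReal.ofReal (r ^ (θ * n)) := by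
  obtain ⟨C, hC, hdiff⟩ := exists_measure_shortVectorEvent_diff_le μ hθ0.le hθ1
  let q : ℝ := 2 ^ (-(θ * n))
  have hq : q < 1 := Real.rpow_lt_one_of_one_lt_of_neg one_lt_two (neg_lt_zero.2 (by positivity))
  have hsum : ∑' j : ℕ, ENNReal.ofReal (q ^ j) ≠ ∞ :=
    (summable_geometric_of_lt_one (by positivity) hq).tsum_ofReal_ne_top
  refine ⟨C * ∑' j : ℕ, ENNReal.ofReal (q ^ j), by finiteness, fun r hr => ?_⟩
  obtain rfl | hr := hr.eq_or_lt
  · simp [shortVectorEvent_zero]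
  have hscale : ∀ j : ℕ, (r / 2 ^ j) ^ (θ * n) = q ^ j * r ^ (θ * n) := fun j => by
    rw [Real.div_rpow hr.le (by positivity), ← Real.rpow_pow_comm two_pos.le, div_eq_inv_mul,
      ← inv_pow, ← Real.rpow_neg two_pos.le]
  calc μ (shortVectorEvent n r)
      ≤ ∑' j : ℕ, μ (shortVectorEvent n (r / 2 ^ j) \ shortVectorEvent n (r / 2 ^ j / 2)) :=
        (measure_mono shortVectorEvent_subset_iUnion_diff).trans (measure_iUnion_le _)
    _ ≤ ∑' j : ℕ, C * (ENNReal.ofReal (q ^ j) * ENNReal.ofReal (r ^ (θ * n))) :=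
        ENNReal.tsum_le_tsum fun j => by
          rw [← ENNReal.ofReal_mul (by positivity), ← hscale]
          exact hdiff _ (by positivity)
    _ = C * (∑' j : ℕ, ENNReal.ofReal (q ^ j)) * ENNReal.ofReal (r ^ (θ * n)) := by
        rw [ENNReal.tsum_mul_left, ENNReal.tsum_mul_right, mul_assoc]

end ShortVectors

section IntegerTimes

open LatticeSpace

theorem ae_eventually_rpow_neg_lt_norm {n : ℕ} (hn : n ≠ 0) {μ : Measure (LatticeSpace n)}
    [IsFiniteMeasure μ] [SMulInvariantMeasure (SLR n) (LatticeSpace n) μ] (g : ℕ → SLR n) {β : ℝ}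
    (hβ : 1 / (n : ℝ) < β) :
    ∀ᵐ Λ ∂μ, ∀ᶠ k : ℕ in atTop, ∀ v ∈ points (g k • Λ), v ≠ 0 → (k : ℝ) ^ (-β) < ‖v‖ := by
  have hn' : (0 : ℝ) < n := by positivity
  have hnβ : 1 < β * n := (div_lt_iff₀ hn').1 hβ
  obtain ⟨θ, hθ, hθ1⟩ := exists_between (inv_lt_one_of_one_lt₀ hnβ)
  have hθ0 : 0 < θ := (inv_pos.2 (one_pos.trans hnβ)).trans hθ
  have hexponent : -β * (θ * n) < -1 := by
    linarith [(inv_lt_iff_one_lt_mul₀ (one_pos.trans hnβ)).1 hθ]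
  obtain ⟨C, hC, hmeasure⟩ := exists_measure_shortVectorEvent_le hn μ hθ0 hθ1
  let B : ℕ → Set (LatticeSpace n) := fun k => (g k • ·) ⁻¹' shortVectorEvent n ((k : ℝ) ^ (-β))
  have hB : ∀ k, μ (B k) ≤ C * ENNReal.ofReal ((k : ℝ) ^ (-β * (θ * n))) := fun k => by
    rw [measure_preimage_smul, Real.rpow_mul k.cast_nonneg]
    exact hmeasure _ (by positivity)
  have hsum : ∑' k, μ (B k) ≠ ∞ := by
    refine ne_top_of_le_ne_top ?_ (ENNReal.tsum_le_tsum hB)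
    rw [ENNReal.tsum_mul_left]
    exact ENNReal.mul_ne_top hC (Real.summable_nat_rpow.2 hexponent).tsum_ofReal_ne_top
  filter_upwards [ae_eventually_notMem hsum] with Λ hΛ
  exact hΛ.mono fun k hk => notMem_shortVectorEvent.1 hk

end IntegerTimes

section Alpha

open LatticeSpace

variable {n : ℕ} {Λ : LatticeSpace n}

theorem alpha1_nonneg (Λ : LatticeSpace n) : 0 ≤ alpha1 n Λ := by
  refine Real.sSup_nonneg ?_
  rintro _ ⟨g, -, m, -, rfl⟩
  exact div_nonneg zero_le_one (norm_nonneg _)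

theorem norm_le_eNorm (v : Fin n → ℝ) : ‖v‖ ≤ eNorm v :=
  (pi_norm_le_iff_of_nonneg (norm_nonneg _)).2 fun i =>
    PiLp.norm_apply_le ((WithLp.equiv 2 (Fin n → ℝ)).symm v) i

theorem vecOf_ne_zero (g : SLR n) {m : Fin n → ℤ} (hm : m ≠ 0) : vecOf n g m ≠ 0 := by
  intro hzero
  have hcoord := inv_mulVec_vecOf g m
  rw [hzero, Matrix.mulVec_zero] at hcoord
  exact hm (funext fun i => Int.cast_eq_zero.1 (congrFun hcoord i).symm)

theorem alpha1_le {R : ℝ} (hR : 0 ≤ R) (h : ∀ v ∈ points Λ, v ≠ 0 → 1 ≤ R * ‖v‖) :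
    alpha1 n Λ ≤ R := by
  refine Real.sSup_le ?_ hR
  rintro _ ⟨g, rfl, m, hm, rfl⟩
  have hv0 : vecOf n g m ≠ 0 := vecOf_ne_zero g hm
  rw [div_le_iff₀ ((norm_pos_iff.2 hv0).trans_le (norm_le_eNorm _))]
  exact (h _ (mem_latticeOf.2 ⟨m, rfl⟩) hv0).trans
    (mul_le_mul_of_nonneg_left (norm_le_eNorm _) hR)

open scoped Matrix.Norms.Operator in
theorem alpha1_le_norm_div {h : SLR n} {r : ℝ} (hr : 0 < r)
    (hshort : ∀ v ∈ points (h • Λ), v ≠ 0 → r < ‖v‖) :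
    alpha1 n Λ ≤ ‖(h : Matrix (Fin n) (Fin n) ℝ)‖ / r := by
  refine alpha1_le (by positivity) fun v hv hv0 => ?_
  have hinj : Function.Injective ((h : Matrix (Fin n) (Fin n) ℝ) *ᵥ ·) :=
    Matrix.mulVec_injective_of_isUnit ((Matrix.isUnit_iff_isUnit_det _).2 (by simp [h.2]))
  have hhv0 : (h : Matrix (Fin n) (Fin n) ℝ) *ᵥ v ≠ 0 := fun hzero =>
    hv0 (hinj (hzero.trans (Matrix.mulVec_zero _).symm))
  rw [div_mul_eq_mul_div, one_le_div hr]
  exact (hshort _ (mem_points_smul.2 ⟨v, hv, rfl⟩) hhv0).le.trans (Matrix.linfty_opNorm_mulVec _ v)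

open scoped Matrix.Norms.Operator in
theorem exists_eventually_alpha1_le_mul_rpow {u : ℝ → SLR n} (hu_hom : ∀ s t, u (s + t) = u s * u t)
    (hu_cont : Continuous fun t => (u t : Matrix (Fin n) (Fin n) ℝ)) {β : ℝ} (hβ : 0 ≤ β)
    (h : ∀ᶠ k : ℕ in atTop, ∀ v ∈ points (u k • Λ), v ≠ 0 → (k : ℝ) ^ (-β) < ‖v‖) :
    ∃ M : ℝ, ∀ᶠ t in atTop, alpha1 n (u t • Λ) ≤ M * t ^ β := by
  obtain ⟨M, hM⟩ :=
    (isCompact_Icc (a := (-1 : ℝ)) (b := 0)).exists_bound_of_continuousOn hu_cont.continuousOn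
  refine ⟨M, ?_⟩
  filter_upwards [tendsto_nat_floor_atTop.eventually h, eventually_ge_atTop 1] with t hshort ht
  have hfloor : (⌊t⌋₊ : ℝ) ≤ t := Nat.floor_le (by linarith)
  have hpos : (0 : ℝ) < ⌊t⌋₊ := by exact_mod_cast Nat.floor_pos.2 ht
  have hsmul : u ⌊t⌋₊ • Λ = u (⌊t⌋₊ - t) • u t • Λ := by
    rw [smul_smul, ← hu_hom, sub_add_cancel]
  have hbound : ‖(u (⌊t⌋₊ - t) : Matrix (Fin n) (Fin n) ℝ)‖ ≤ M :=
    hM _ ⟨by linarith [Nat.lt_floor_add_one t], by linarith⟩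
  have hM0 : 0 ≤ M := (norm_nonneg _).trans hbound
  rw [hsmul] at hshort
  calc alpha1 n (u t • Λ)
      ≤ ‖(u (⌊t⌋₊ - t) : Matrix (Fin n) (Fin n) ℝ)‖ / (⌊t⌋₊ : ℝ) ^ (-β) :=
        alpha1_le_norm_div (by positivity) hshort
    _ = ‖(u (⌊t⌋₊ - t) : Matrix (Fin n) (Fin n) ℝ)‖ * (⌊t⌋₊ : ℝ) ^ β := by
        rw [Real.rpow_neg hpos.le, div_inv_eq_mul]
    _ ≤ M * t ^ β := by gcongr

end Alpha

section Growth

theorem limsup_le_of_eventually_le {ι : Type*} {l : Filter ι} {f : ι → ℝ} {a : ℝ} (ha : 0 ≤ a)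
    (h : ∀ᶠ t in l, f t ≤ a) : limsup f l ≤ a := by
  rw [Filter.limsup_eq]
  by_cases hb : BddBelow {x | ∀ᶠ t in l, f t ≤ x}
  · exact csInf_le hb h
  · -- Here the limit superior takes the junk value `0`.
    rwa [Real.sInf_of_not_bddBelow hb]

theorem limsup_log_div_log_le {f : ℝ → ℝ} (hf : ∀ t, 0 ≤ f t) {M β : ℝ} (hβ : 0 ≤ β)
    (h : ∀ᶠ t in atTop, f t ≤ M * t ^ β) :
    limsup (fun t => Real.log (f t) / Real.log t) atTop ≤ β := by
  refine le_of_forall_pos_le_add fun ε hε => limsup_le_of_eventually_le (by positivity) ?_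
  filter_upwards [h, (tendsto_rpow_atTop hε).eventually_ge_atTop M, eventually_gt_atTop 1]
    with t hft hMt ht
  have ht0 : 0 < t := one_pos.trans ht
  have hpower : f t ≤ t ^ (β + ε) := by
    rw [Real.rpow_add ht0, mul_comm]
    exact hft.trans (mul_le_mul_of_nonneg_right hMt (by positivity))
  rw [div_le_iff₀ (Real.log_pos ht)]
  obtain hzero | hpos := (hf t).eq_or_lt
  · rw [← hzero, Real.log_zero]
    exact mul_nonneg (by positivity) (Real.log_nonneg ht.le)
  · rw [← Real.log_rpow ht0]
    exact Real.log_le_log hpos hpower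

end Growth

theorem unipotent_logarithm_law_upper_general (n : ℕ) (hn : n ≠ 0)
    (μ : Measure (LatticeSpace n)) [IsFiniteMeasure μ]
    [SMulInvariantMeasure (SLR n) (LatticeSpace n) μ]
    (u : ℝ → SLR n) (hu_hom : ∀ s t : ℝ, u (s + t) = u s * u t)
    (hu_cont : Continuous fun t => (u t : Matrix (Fin n) (Fin n) ℝ)) :
    ∀ᵐ Λ ∂μ, Filter.limsup
        (fun t : ℝ => Real.log (alpha1 n (u t • Λ)) / Real.log t) atTop ≤ 1 / (n : ℝ) := by
  have hnoshort : ∀ᵐ Λ ∂μ, ∀ j : ℕ, ∀ᶠ k : ℕ in atTop,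
      ∀ v ∈ LatticeSpace.points (u k • Λ), v ≠ 0 → (k : ℝ) ^ (-(1 / n + 1 / (j + 1) : ℝ)) < ‖v‖ :=
    ae_all_iff.2 fun j =>
      ae_eventually_rpow_neg_lt_norm hn (fun k => u k) (lt_add_of_pos_right _ (by positivity))
  filter_upwards [hnoshort] with Λ hΛ
  have hlimit : Tendsto (fun j : ℕ => 1 / (n : ℝ) + 1 / (j + 1)) atTop (nhds (1 / n)) := by
    simpa only [add_zero] using tendsto_one_div_add_atTop_nhds_zero_nat.const_add (1 / (n : ℝ))
  refine ge_of_tendsto' hlimit fun j => ?_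
  obtain ⟨M, hM⟩ := exists_eventually_alpha1_le_mul_rpow hu_hom hu_cont (by positivity) (hΛ j)
  exact limsup_log_div_log_le (fun t => alpha1_nonneg _) (by positivity) hM

/-- **Upper bound of the logarithm law.** For a one-parameter unipotent subgroup `{u_t}` of
`SL(n,ℝ)`, for almost every unimodular lattice `Λ`,
`limsup_{t→∞} log α₁(u_t Λ)/log t ≤ 1/n`. -/
theorem unipotent_logarithm_law_upper (n : ℕ) (hn : 2 ≤ n)
    (μ : Measure (LatticeSpace n)) [IsProbabilityMeasure μ]
    (hinv : ∀ (g : SLR n) (s : Set (LatticeSpace n)), μ ((fun x => g • x) ⁻¹' s) = μ s)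
    (u : ℝ → SLR n) (hu_hom : ∀ s t : ℝ, u (s + t) = u s * u t)
    (hu_cont : Continuous fun t => (u t : Matrix (Fin n) (Fin n) ℝ))
    (hu_unip : ∀ t, IsNilpotent ((u t : Matrix (Fin n) (Fin n) ℝ) - 1)) :
    ∀ᵐ Λ ∂μ, Filter.limsup
        (fun t : ℝ => Real.log (alpha1 n (u t • Λ)) / Real.log t) atTop ≤ 1 / (n : ℝ) := by
  have : SMulInvariantMeasure (SLR n) (LatticeSpace n) μ := ⟨fun g s _ => hinv g s⟩
  exact unipotent_logarithm_law_upper_general n (by omega) μ u hu_hom hu_cont
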